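/- Let 𝒴 ⊆ L^0(Ω,𝐅_T,P) be a vector subspace (not necessarily finite-dimensional) containing ℝ^N_0. Then NCA(𝒴) holds if and only if for every Y ∈ 𝒴 the set ℳ_e(span({Y} ∪ ℝ^N_0)) is nonempty, where span({Y} ∪ ℝ^N_0) is the linear span in L^0(Ω,𝐅_T,P) of the single random vector Y together with ℝ^N_0. -/

import Mathlib

open MeasureTheory Filter Topology

namespace CollectiveArb

variable {Ω : Type*}

/-- Terminal gains `K_i` of admissible (predictable) strategies for an agent with
filtration `F`, trading the assets indexed by `A`, over times `1,…,T`. -/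
def gainsSet {J : ℕ} (F : ℕ → MeasurableSpace Ω) (T : ℕ)
    (A : Finset (Fin J)) (X : Fin J → ℕ → Ω → ℝ) : Set (Ω → ℝ) :=
  { g | ∃ H : Fin J → ℕ → Ω → ℝ,
      (∀ j ∈ A, ∀ s, 1 ≤ s → s ≤ T → Measurable[F (s - 1)] (H j s)) ∧
      g = fun ω => ∑ j ∈ A, ∑ s ∈ Finset.Icc 1 T, H j s ω * (X j s ω - X j (s - 1) ω) }

/-- No collective arbitrage for the gains sets `K` and the exchange set `Y`:
`(K₁ × ⋯ × K_N + Y) ∩ L⁰₊ = {0}`. -/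
def NCA {N : ℕ} [MeasurableSpace Ω] (P : Measure Ω)
    (K : Fin N → Set (Ω → ℝ)) (Y : Set (Fin N → Ω → ℝ)) : Prop :=
  ∀ k : Fin N → Ω → ℝ, ∀ y ∈ Y, (∀ i, k i ∈ K i) →
    (∀ i, ∀ᵐ ω ∂P, 0 ≤ k i ω + y i ω) →
    ∀ i, (fun ω => k i ω + y i ω) =ᵐ[P] fun _ => (0 : ℝ)

/-- `K^𝒴 = ⨉ᵢ (Kᵢ − L⁰₊(ℱᵢ_T)) + 𝒴`. -/
def KY {N : ℕ} [MeasurableSpace Ω] (P : Measure Ω)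
    (FT : Fin N → MeasurableSpace Ω)
    (K : Fin N → Set (Ω → ℝ)) (Y : Set (Fin N → Ω → ℝ)) : Set (Fin N → Ω → ℝ) :=
  { f | ∃ (k l y : Fin N → Ω → ℝ), y ∈ Y ∧ (∀ i, k i ∈ K i) ∧
      (∀ i, Measurable[FT i] (l i) ∧ (∀ᵐ ω ∂P, 0 ≤ l i ω)) ∧
      ∀ i, f i = fun ω => k i ω - l i ω + y i ω }

/-- `ℝ^N_0`: zero-sum deterministic exchanges, viewed as constant random vectors. -/
def zeroSum (Ω : Type*) (N : ℕ) : Set (Fin N → Ω → ℝ) :=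
  { y | ∃ x : Fin N → ℝ, (∑ i, x i) = 0 ∧ ∀ i, y i = fun _ => x i }

/-- `span(ℝ^N_0, Y_1, …, Y_R)`: the finite-dimensional space of exchanges generated
by `ℝ^N_0` and the random vectors `Ys 1, …, Ys R`. -/
def spanExch {N R : ℕ} (Ys : Fin R → Fin N → Ω → ℝ) : Set (Fin N → Ω → ℝ) :=
  { y | ∃ (x : Fin N → ℝ) (c : Fin R → ℝ), (∑ i, x i) = 0 ∧
      ∀ i, y i = fun ω => x i + ∑ r, c r * Ys r i ω }

/-- `span(𝒴₀ ∪ {g})` for a vector subspace `𝒴₀`. -/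
def spanWith {N : ℕ} (Y0 : Set (Fin N → Ω → ℝ)) (g : Fin N → Ω → ℝ) :
    Set (Fin N → Ω → ℝ) :=
  { y | ∃ w ∈ Y0, ∃ c : ℝ, ∀ i, y i = fun ω => w i ω + c * g i ω }

/-- Equivalent martingale measures `Mᵢₑ` for the assets in `A`, w.r.t. the filtration `F`. -/
def martMeasures {J : ℕ} [MeasurableSpace Ω] (P : Measure Ω)
    (F : ℕ → MeasurableSpace Ω) (T : ℕ) (A : Finset (Fin J))
    (X : Fin J → ℕ → Ω → ℝ) : Set (Measure Ω) :=
  { Q | IsProbabilityMeasure Q ∧ Q ≪ P ∧ P ≪ Q ∧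
      ∀ j ∈ A, (∀ t, t ≤ T → Integrable (X j t) Q) ∧
        ∀ s t, s ≤ t → t ≤ T → X j s =ᵐ[Q] Q[X j t | F s] }

/-- Equivalent collective martingale measures `ℳₑ(𝒴)`. -/
def MeY {J N : ℕ} [MeasurableSpace Ω] (P : Measure Ω)
    (F : Fin N → ℕ → MeasurableSpace Ω) (T : ℕ) (assets : Fin N → Finset (Fin J))
    (X : Fin J → ℕ → Ω → ℝ) (Y : Set (Fin N → Ω → ℝ)) : Set (Fin N → Measure Ω) :=
  { Q | (∀ i, Q i ∈ martMeasures P (F i) T (assets i) X) ∧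
      (∀ y ∈ Y, ∀ i, Integrable (y i) (Q i)) ∧
      ∀ y ∈ Y, (∑ i, ∫ ω, y i ω ∂(Q i)) ≤ 0 }

/-- `ℳ^φ_e(𝒴) = {Q ∈ ℳₑ(𝒴) : E_{Qⁱ}[|φⁱ|] < ∞ ∀ i}`. -/
def MeYphi {J N : ℕ} [MeasurableSpace Ω] (P : Measure Ω)
    (F : Fin N → ℕ → MeasurableSpace Ω) (T : ℕ) (assets : Fin N → Finset (Fin J))
    (X : Fin J → ℕ → Ω → ℝ) (Y : Set (Fin N → Ω → ℝ))
    (φ : Fin N → Ω → ℝ) : Set (Fin N → Measure Ω) :=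
  { Q | Q ∈ MeY P F T assets X Y ∧ ∀ i, Integrable (φ i) (Q i) }

/-- Closedness of a set of random vectors under componentwise `P`-a.s. convergence
of sequences (within `L⁰(Ω, 𝐅_T, P)`). -/
def ClosedAS {N : ℕ} [MeasurableSpace Ω] (P : Measure Ω)
    (FT : Fin N → MeasurableSpace Ω) (S : Set (Fin N → Ω → ℝ)) : Prop :=
  ∀ (f : ℕ → Fin N → Ω → ℝ) (g : Fin N → Ω → ℝ),
    (∀ n, f n ∈ S) → (∀ i, Measurable[FT i] (g i)) →
    (∀ i, ∀ᵐ ω ∂P, Tendsto (fun n => f n i ω) atTop (𝓝 (g i ω))) →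
    g ∈ S

/-- Collective superhedging price `ρ^𝒴₊(f)` (with `inf ∅ = +∞`). -/
noncomputable def rhoPlus {N : ℕ} [MeasurableSpace Ω] (P : Measure Ω)
    (K : Fin N → Set (Ω → ℝ)) (Y : Set (Fin N → Ω → ℝ))
    (f : Fin N → Ω → ℝ) : EReal :=
  sInf { z : EReal | ∃ m : Fin N → ℝ, z = ((∑ i, m i : ℝ) : EReal) ∧
      ∃ k : Fin N → Ω → ℝ, (∀ i, k i ∈ K i) ∧ ∃ y ∈ Y,
        ∀ i, ∀ᵐ ω ∂P, f i ω ≤ m i + k i ω + y i ω }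

/-- Collective subhedging price `ρ^𝒴₋(f)` (with `sup ∅ = −∞`). -/
noncomputable def rhoMinus {N : ℕ} [MeasurableSpace Ω] (P : Measure Ω)
    (K : Fin N → Set (Ω → ℝ)) (Y : Set (Fin N → Ω → ℝ))
    (f : Fin N → Ω → ℝ) : EReal :=
  sSup { z : EReal | ∃ m : Fin N → ℝ, z = ((∑ i, m i : ℝ) : EReal) ∧
      ∃ k : Fin N → Ω → ℝ, (∀ i, k i ∈ K i) ∧ ∃ y ∈ Y,
        ∀ i, ∀ᵐ ω ∂P, m i + k i ω - y i ω ≤ f i ω }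

/-- `ρ^𝒴₊(f)` is attained. -/
def rhoPlusAttained {N : ℕ} [MeasurableSpace Ω] (P : Measure Ω)
    (K : Fin N → Set (Ω → ℝ)) (Y : Set (Fin N → Ω → ℝ))
    (f : Fin N → Ω → ℝ) : Prop :=
  ∃ (m : Fin N → ℝ) (k y : Fin N → Ω → ℝ), y ∈ Y ∧ (∀ i, k i ∈ K i) ∧
    (∀ i, ∀ᵐ ω ∂P, f i ω ≤ m i + k i ω + y i ω) ∧
    rhoPlus P K Y f = ((∑ i, m i : ℝ) : EReal)

/-- `ρ^𝒴₋(f)` is attained. -/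
def rhoMinusAttained {N : ℕ} [MeasurableSpace Ω] (P : Measure Ω)
    (K : Fin N → Set (Ω → ℝ)) (Y : Set (Fin N → Ω → ℝ))
    (f : Fin N → Ω → ℝ) : Prop :=
  ∃ (m : Fin N → ℝ) (k y : Fin N → Ω → ℝ), y ∈ Y ∧ (∀ i, k i ∈ K i) ∧
    (∀ i, ∀ᵐ ω ∂P, m i + k i ω - y i ω ≤ f i ω) ∧
    rhoMinus P K Y f = ((∑ i, m i : ℝ) : EReal)

/-- `f` is `𝒴`-collectively replicable: `f ∈ ℝ^N + (K₁ × ⋯ × K_N) + 𝒴` in `L⁰`. -/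
def Replicable {N : ℕ} [MeasurableSpace Ω] (P : Measure Ω)
    (K : Fin N → Set (Ω → ℝ)) (Y : Set (Fin N → Ω → ℝ))
    (f : Fin N → Ω → ℝ) : Prop :=
  ∃ (m : Fin N → ℝ) (k y : Fin N → Ω → ℝ), y ∈ Y ∧ (∀ i, k i ∈ K i) ∧
    ∀ i, f i =ᵐ[P] fun ω => m i + k i ω + y i ω


/-- The set of functions a.e. dominated by a member of `A` is closed under a.e. limits. -/
def HullClosed {α : Type*} [MeasurableSpace α] (μ : Measure α) (A : Set (α → ℝ)) : Prop :=
  ∀ (f : ℕ → α → ℝ) (g : α → ℝ), (∀ n, ∃ a ∈ A, f n ≤ᵐ[μ] a) →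
    (∀ᵐ ω ∂μ, Tendsto (fun n => f n ω) atTop (𝓝 (g ω))) → ∃ a ∈ A, g ≤ᵐ[μ] a

/-- Gains from trading, for each pair `(𝓗, ξ)` of the list, an `𝓗`-measurable amount of `ξ`. -/
def gains {α : Type*} : List (MeasurableSpace α × (α → ℝ)) → Set (α → ℝ)
  | [] => {0}
  | p :: L => {f | ∃ h : α → ℝ, Measurable[p.1] h ∧ ∃ a ∈ gains L, f = h * p.2 + a}

/-- A bounded sequence of measurable functions has a measurable pointwise cluster point,
approximated along measurable random indices. -/
lemma exists_measurable_cluster {α : Type*} {𝓗 : MeasurableSpace α} (p : ℕ → α → ℝ)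
    (hp : ∀ n, Measurable (p n)) (hb : ∀ n ω, |p n ω| ≤ 1) :
    ∃ (q : α → ℝ) (τ : ℕ → α → ℕ), Measurable q ∧ (∀ ω, |q ω| ≤ 1) ∧
      (∀ k, Measurable (τ k)) ∧ (∀ k ω, k ≤ τ k ω) ∧
      ∀ ω, Tendsto (fun k => p (τ k ω) ω) atTop (𝓝 (q ω)) := by
  classical
  set q : α → ℝ := fun ω => limsup (fun n => p n ω) atTop with hq
  have hqm : Measurable q := Measurable.limsup hp
  have hbdd : ∀ ω, IsBoundedUnder (· ≤ ·) atTop (fun n => p n ω) := fun ω =>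
    isBoundedUnder_of ⟨1, fun n => (abs_le.1 (hb n ω)).2⟩
  have hcob : ∀ ω, IsCoboundedUnder (· ≤ ·) atTop (fun n => p n ω) := fun ω =>
    (isBoundedUnder_of ⟨-1, fun n => (abs_le.1 (hb n ω)).1⟩ :
      IsBoundedUnder (· ≥ ·) atTop (fun n => p n ω)).isCoboundedUnder_le
  have hex : ∀ (k : ℕ) (ω : α), ∃ n, k ≤ n ∧ |p n ω - q ω| < 1 / ((k : ℝ) + 1) := by
    intro k ω
    have hk : (0 : ℝ) < 1 / ((k : ℝ) + 1) := by positivity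
    have h1 := frequently_lt_of_lt_limsup (hcob ω)
      (show q ω - 1 / ((k : ℝ) + 1) < limsup (fun n => p n ω) atTop by simpa [hq] using hk)
    have h2 := eventually_lt_of_limsup_lt
      (show limsup (fun n => p n ω) atTop < q ω + 1 / ((k : ℝ) + 1) by simpa [hq] using hk)
      (hbdd ω)
    obtain ⟨n, ⟨h1, h2⟩, h3⟩ := ((h1.and_eventually h2).and_eventually
      (eventually_ge_atTop k)).exists
    exact ⟨n, h3, abs_lt.2 ⟨by linarith, by linarith⟩⟩
  have hlim : ∀ ω, Tendsto (fun k => p (Nat.find (hex k ω)) ω) atTop (𝓝 (q ω)) := by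
    intro ω
    rw [tendsto_iff_dist_tendsto_zero]
    refine squeeze_zero (fun _ => dist_nonneg) (fun k => ?_)
      tendsto_one_div_add_atTop_nhds_zero_nat
    rw [Real.dist_eq]
    exact (Nat.find_spec (hex k ω)).2.le
  refine ⟨q, fun k ω => Nat.find (hex k ω), hqm, fun ω => ?_, fun k => ?_, fun k ω => ?_, hlim⟩
  · exact le_of_tendsto (hlim ω).abs (Eventually.of_forall fun k => hb _ ω)
  · refine measurable_find (hex k) fun n => ?_
    exact (MeasurableSet.const _).inter
      (measurableSet_lt ((hp n).sub hqm).abs measurable_const)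
  · exact (Nat.find_spec (hex k ω)).1

lemma measurable_ite_abs_le {α : Type*} {𝓗 : MeasurableSpace α} {h : α → ℝ}
    (hh : Measurable h) (c : ℝ) : Measurable fun ω => if |h ω| ≤ c then (1 : ℝ) else 0 :=
  Measurable.ite (measurableSet_le hh.abs measurable_const) measurable_const measurable_const

lemma measurable_ite_abs_eq {α : Type*} {𝓗 : MeasurableSpace α} {h : α → ℝ}
    (hh : Measurable h) (c : ℝ) : Measurable fun ω => if |h ω| = c then (1 : ℝ) else 0 :=
  Measurable.ite (measurableSet_eq_fun hh.abs measurable_const) measurable_const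
    measurable_const

lemma measurable_one_sub_abs {α : Type*} {𝓗 : MeasurableSpace α} {h : α → ℝ}
    (hh : Measurable h) : Measurable fun ω => 1 - |h ω| :=
  measurable_const.sub hh.abs

lemma measurable_div_one_add_abs {α : Type*} {𝓗 : MeasurableSpace α} {h : α → ℝ}
    (hh : Measurable h) : Measurable fun ω => h ω / (1 + |h ω|) :=
  hh.div (measurable_const.add hh.abs)

lemma measurable_ite_nat_eq {α : Type*} {𝓗 : MeasurableSpace α} {τ : α → ℕ} {h : α → ℝ}
    (hτ : Measurable τ) (hh : Measurable h) (n : ℕ) :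
    Measurable fun ω => if τ ω = n then h ω else 0 :=
  Measurable.ite (hτ (measurableSet_singleton n)) hh measurable_const

/-- Adding one conditionally scalar trade preserves closedness under no arbitrage. -/
lemma HullClosed.add_trade {α : Type*} {𝓗 m0 : MeasurableSpace α} {μ : Measure α}
    {A : Set (α → ℝ)} (hcl : HullClosed μ A) (hzero : 0 ∈ A)
    (hadd : ∀ a ∈ A, ∀ b ∈ A, a + b ∈ A)
    (hmul : ∀ h : α → ℝ, Measurable[𝓗] h → ∀ a ∈ A, h * a ∈ A) (ξ : α → ℝ)
    (hNA : ∀ h : α → ℝ, Measurable[𝓗] h → ∀ a ∈ A, 0 ≤ᵐ[μ] h * ξ + a → h * ξ + a =ᵐ[μ] 0) :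
    HullClosed μ {f | ∃ h : α → ℝ, Measurable[𝓗] h ∧ ∃ a ∈ A, f = h * ξ + a} := by
  classical
  intro f g hf hlim
  choose F hF hfF using hf
  choose h hh a ha hFe using hF
  have hfa : ∀ n, ∀ᵐ ω ∂μ, f n ω ≤ h n ω * ξ ω + a n ω := fun n => by
    filter_upwards [hfF n] with ω hω
    simpa [hFe n] using hω
  have hsum : ∀ (s : Finset ℕ) (b : ℕ → α → ℝ), (∀ n, b n ∈ A) → ∑ n ∈ s, b n ∈ A := by
    intro s b hb
    induction s using Finset.induction_on with
    | empty => simpa using hzero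
    | insert n s hn ih => rw [Finset.sum_insert hn]; exact hadd _ (hb n) _ ih
  set p : ℕ → α → ℝ := fun n ω => h n ω / (1 + |h n ω|) with hp
  have hpos : ∀ n ω, 0 < 1 + |h n ω| := fun n ω => by positivity
  have hpm : ∀ n, Measurable[𝓗] (p n) := fun n =>
    measurable_div_one_add_abs (hh n)
  have habs : ∀ n ω, |p n ω| = 1 - 1 / (1 + |h n ω|) := fun n ω => by
    simp only [hp, abs_div, abs_of_pos (hpos n ω)]
    field_simp [(hpos n ω).ne']
    ring
  have hpb : ∀ n ω, |p n ω| ≤ 1 := fun n ω => by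
    rw [habs]; have := one_div_pos.2 (hpos n ω); linarith
  have hph : ∀ n ω, (1 - |p n ω|) * h n ω = p n ω := fun n ω => by
    rw [habs]; simp only [hp]; field_simp; ring
  obtain ⟨q, τ, hqm, hqb, hτm, hτk, hτlim⟩ := exists_measurable_cluster p hpm hpb
  -- the glued sequence
  have hglue : ∀ k, ∃ b ∈ A,
      (fun ω => (1 - |p (τ k ω) ω|) * f (τ k ω) ω - p (τ k ω) ω * ξ ω) ≤ᵐ[μ] b := by
    intro k
    have hind : ∀ n, Measurable[𝓗] fun ω => if τ k ω = n then 1 - |p n ω| else (0 : ℝ) :=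
      fun n => measurable_ite_nat_eq (hτm k) (measurable_one_sub_abs (hpm n)) n
    refine hcl (fun M ω => ∑ n ∈ Finset.range M,
      if τ k ω = n then (1 - |p n ω|) * f n ω - p n ω * ξ ω else 0) _ (fun M => ?_) ?_
    · refine ⟨_, hsum (Finset.range M) _ (fun n => hmul _ (hind n) _ (ha n)), ?_⟩
      filter_upwards [ae_all_iff.2 hfa] with ω hω
      rw [Finset.sum_apply]
      refine Finset.sum_le_sum fun n _ => ?_
      simp only [Pi.mul_apply]
      split_ifs with hn
      · have h1 := mul_le_mul_of_nonneg_left (hω n) (sub_nonneg.2 (hpb n ω))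
        have h2 := hph n ω
        calc _ ≤ (1 - |p n ω|) * (h n ω * ξ ω + a n ω) - p n ω * ξ ω := by linarith
          _ = ((1 - |p n ω|) * h n ω - p n ω) * ξ ω + (1 - |p n ω|) * a n ω := by ring
          _ = _ := by rw [h2]; ring
      · simp
    · refine Eventually.of_forall fun ω => ?_
      refine tendsto_const_nhds.congr' ?_
      filter_upwards [eventually_gt_atTop (τ k ω)] with M hM
      rw [Finset.sum_ite_eq, if_pos (Finset.mem_range.2 hM)]
  obtain ⟨b, hbA, hb⟩ := hcl _ (fun ω => (1 - |q ω|) * g ω - q ω * ξ ω) hglue (by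
    filter_upwards [hlim] with ω hω
    have hτt : Tendsto (fun k => τ k ω) atTop atTop := tendsto_atTop_mono (hτk · ω) tendsto_id
    exact ((tendsto_const_nhds.sub (hτlim ω).abs).mul (hω.comp hτt)).sub
      ((hτlim ω).mul tendsto_const_nhds))
  set e : α → ℝ := fun ω => if |q ω| = 1 then 1 else 0 with he
  have hem : Measurable[𝓗] e := measurable_ite_abs_eq hqm 1
  have hz := hNA (e * q) (hem.mul hqm) (e * b) (hmul e hem b hbA) (by
    filter_upwards [hb] with ω hω
    simp only [Pi.zero_apply, Pi.add_apply, Pi.mul_apply, he]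
    split_ifs with h1
    · rw [h1] at hω; linarith
    · simp)
  -- on `{|q| = 1}` the trade `ξ` is redundant
  obtain ⟨b', hb'A, hb'⟩ := hcl (fun n ω => e ω * f n ω) (fun ω => e ω * g ω) (fun n =>
    ⟨-(h n * e * q) * b + e * a n,
      hadd _ (hmul _ (((hh n).mul hem).mul hqm).neg _ hbA) _ (hmul _ hem _ (ha n)), by
      filter_upwards [hfa n, hz] with ω h1 h2
      simp only [Pi.zero_apply, Pi.add_apply, Pi.mul_apply, Pi.neg_apply, he] at h2 ⊢
      split_ifs at h2 ⊢ with h3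
      · have h4 : q ω * q ω = 1 := by rw [← abs_mul_abs_self, h3, one_mul]
        have h5 : ξ ω = -(q ω * b ω) := by linear_combination q ω * h2 - ξ ω * h4
        rw [h5] at h1
        linarith
      · simp⟩) (by
    filter_upwards [hlim] with ω hω
    exact hω.const_mul _)
  set r : α → ℝ := fun ω => (1 - |q ω|)⁻¹ with hr
  have hrm : Measurable[𝓗] r := (measurable_one_sub_abs hqm).inv
  refine ⟨_, ⟨r * q, hrm.mul hqm, b' + r * b, hadd _ hb'A _ (hmul _ hrm _ hbA), rfl⟩, ?_⟩
  filter_upwards [hb, hb'] with ω h1 h2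
  simp only [Pi.add_apply, Pi.mul_apply, he, hr] at h1 h2 ⊢
  have h0 : 0 ≤ 1 - |q ω| := sub_nonneg.2 (hqb ω)
  split_ifs at h2 with h3
  · simpa [h3] using h2
  · have h4 : 1 - |q ω| ≠ 0 := fun h => h3 (by linarith)
    have h5 := mul_le_mul_of_nonneg_left h1 (inv_nonneg.2 h0)
    have h6 : (1 - |q ω|)⁻¹ * ((1 - |q ω|) * g ω - q ω * ξ ω)
        = g ω - (1 - |q ω|)⁻¹ * q ω * ξ ω := by field_simp
    linarith

lemma zero_mem_gains {α : Type*} (L : List (MeasurableSpace α × (α → ℝ))) : 0 ∈ gains L := by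
  induction L with
  | nil => rfl
  | cons p L ih => exact ⟨0, measurable_const, 0, ih, by simp⟩

lemma add_mem_gains {α : Type*} {L : List (MeasurableSpace α × (α → ℝ))} :
    ∀ {a b : α → ℝ}, a ∈ gains L → b ∈ gains L → a + b ∈ gains L := by
  induction L with
  | nil => rintro a b rfl rfl; exact add_zero _
  | cons p L ih =>
    rintro _ _ ⟨h, hh, a, ha, rfl⟩ ⟨h', hh', b, hb, rfl⟩
    exact ⟨h + h', hh.add hh', a + b, ih ha hb, by ring⟩

lemma mul_mem_gains {α : Type*} {𝓗 : MeasurableSpace α} {h : α → ℝ} (hh : Measurable h) :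
    ∀ {L : List (MeasurableSpace α × (α → ℝ))}, (∀ p ∈ L, 𝓗 ≤ p.1) →
      ∀ {a : α → ℝ}, a ∈ gains L → h * a ∈ gains L
  | [], _, a, ha => by rw [show a = 0 from ha, mul_zero]; rfl
  | p :: L, hL, _, ⟨k, hk, a, ha, rfl⟩ =>
    ⟨h * k, (hh.mono (hL p List.mem_cons_self) le_rfl).mul hk, h * a,
      mul_mem_gains hh (fun q hq => hL q (List.mem_cons_of_mem _ hq)) ha, by ring⟩

lemma mem_gains_cons {α : Type*} {L : List (MeasurableSpace α × (α → ℝ))}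
    {p : MeasurableSpace α × (α → ℝ)} {a : α → ℝ} (ha : a ∈ gains L) : a ∈ gains (p :: L) :=
  ⟨0, measurable_const, a, ha, by simp⟩

lemma mul_trade_mem_gains {α : Type*} {L : List (MeasurableSpace α × (α → ℝ))}
    {p : MeasurableSpace α × (α → ℝ)} (hp : p ∈ L) {h : α → ℝ} (hh : Measurable[p.1] h) :
    h * p.2 ∈ gains L := by
  induction L with
  | nil => simp at hp
  | cons r L ih =>
    rcases List.mem_cons.1 hp with rfl | hp
    · exact ⟨h, hh, 0, zero_mem_gains L, by simp⟩
    · exact mem_gains_cons (ih hp)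

lemma gains_subset {α : Type*} {S : Set (α → ℝ)} (hzero : 0 ∈ S)
    (hadd : ∀ a ∈ S, ∀ b ∈ S, a + b ∈ S) {L : List (MeasurableSpace α × (α → ℝ))}
    (hL : ∀ p ∈ L, ∀ h : α → ℝ, Measurable[p.1] h → h * p.2 ∈ S) : gains L ⊆ S := by
  induction L with
  | nil => rintro _ rfl; exact hzero
  | cons p L ih =>
    rintro _ ⟨h, hh, a, ha, rfl⟩
    exact hadd _ (hL p List.mem_cons_self h hh) _
      (ih (fun q hq => hL q (List.mem_cons_of_mem _ hq)) ha)

lemma sum_mem_gains {α ι : Type*} {L : List (MeasurableSpace α × (α → ℝ))} (s : Finset ι)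
    (a : ι → α → ℝ) (ha : ∀ i ∈ s, a i ∈ gains L) : ∑ i ∈ s, a i ∈ gains L :=
  Finset.sum_induction _ (· ∈ gains L) (fun _ _ => add_mem_gains) (zero_mem_gains L) ha

lemma hullClosed_gains {α : Type*} {m0 : MeasurableSpace α} {μ : Measure α}
    {L : List (MeasurableSpace α × (α → ℝ))} (hL : L.Pairwise fun p q => p.1 ≤ q.1)
    (hNA : ∀ a ∈ gains L, 0 ≤ᵐ[μ] a → a =ᵐ[μ] 0) : HullClosed μ (gains L) := by
  induction L with
  | nil =>
    intro f g hf hlim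
    refine ⟨0, rfl, ?_⟩
    have hf' : ∀ n, f n ≤ᵐ[μ] 0 := fun n => by
      obtain ⟨a, rfl, ha⟩ := hf n
      exact ha
    filter_upwards [ae_all_iff.2 hf', hlim] with ω h1 h2
    exact le_of_tendsto h2 (Eventually.of_forall h1)
  | cons p L ih =>
    rw [List.pairwise_cons] at hL
    exact (ih hL.2 fun a ha => hNA a (mem_gains_cons ha)).add_trade (zero_mem_gains L)
      (fun a ha b hb => add_mem_gains ha hb)
      (fun h hh a ha => mul_mem_gains hh hL.1 ha) p.2
      (fun h hh a ha => hNA _ ⟨h, hh, a, ha, rfl⟩)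

/-- Gains bounded below by an integrable function are integrable with mean zero. -/
lemma integral_gains_eq_zero {α : Type*} {m0 : MeasurableSpace α} {μ : Measure α} :
    ∀ {L : List (MeasurableSpace α × (α → ℝ))}, (L.Pairwise fun p q => p.1 ≤ q.1) →
    (∀ p ∈ L, p.1 ≤ m0) → (∀ p ∈ L, Integrable p.2 μ) →
    (∀ p ∈ L, ∀ h : α → ℝ, Measurable[p.1] h → (∃ c, ∀ ω, |h ω| ≤ c) → ∫ ω, h ω * p.2 ω ∂μ = 0) →
    ∀ a ∈ gains L, ∀ y : α → ℝ, Integrable y μ → (∀ᵐ ω ∂μ, 0 ≤ a ω + y ω) →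
      Integrable a μ ∧ ∫ ω, a ω ∂μ = 0
  | [], _, _, _, _, a, ha, y, _, _ => by
    rw [show a = 0 from ha]
    exact ⟨integrable_zero _ _ _, by simp⟩
  | p :: L, hL, hm, hi, hz, _, ⟨h, hh, a, ha, rfl⟩, y, hy, hpos => by
    rw [List.pairwise_cons] at hL
    have hmp : p.1 ≤ m0 := hm p List.mem_cons_self
    set B : ℕ → α → ℝ := fun n ω => if |h ω| ≤ n then 1 else 0 with hB
    have hBm : ∀ n, Measurable[p.1] (B n) := fun n =>
      measurable_ite_abs_le hh n
    have hBh : ∀ n ω, |B n ω * h ω| ≤ n := fun n ω => by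
      simp only [hB]; split_ifs with h1 <;> simp [h1]
    have hB0 : ∀ n ω, 0 ≤ B n ω := fun n ω => by simp only [hB]; split_ifs <;> simp
    have hB1 : ∀ n ω, B n ω ≤ 1 := fun n ω => by simp only [hB]; split_ifs <;> simp
    have hBlim : ∀ ω, ∀ᶠ n in atTop, B n ω = 1 := fun ω => by
      filter_upwards [eventually_ge_atTop ⌈|h ω|⌉₊] with n hn
      simp only [hB]
      rw [if_pos (Nat.ceil_le.1 hn)]
    have hint1 : ∀ n, Integrable (fun ω => B n ω * h ω * p.2 ω) μ := fun n =>
      (hi p List.mem_cons_self).bdd_mul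
        (((hBm n).mul hh).mono hmp le_rfl).aestronglyMeasurable
        (Eventually.of_forall (hBh n))
    have hinty : ∀ n, Integrable (fun ω => B n ω * y ω) μ := fun n =>
      hy.bdd_mul ((hBm n).mono hmp le_rfl).aestronglyMeasurable
        (Eventually.of_forall fun ω => by
          rw [Real.norm_eq_abs, abs_of_nonneg (hB0 n ω)]; exact hB1 n ω)
    have hIH : ∀ n, Integrable (B n * a) μ ∧ ∫ ω, (B n * a) ω ∂μ = 0 := fun n =>
      integral_gains_eq_zero hL.2 (fun q hq => hm q (List.mem_cons_of_mem _ hq))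
        (fun q hq => hi q (List.mem_cons_of_mem _ hq))
        (fun q hq => hz q (List.mem_cons_of_mem _ hq)) _ (mul_mem_gains (hBm n) hL.1 ha)
        (fun ω => B n ω * h ω * p.2 ω + B n ω * y ω) ((hint1 n).add (hinty n)) (by
          filter_upwards [hpos] with ω hω
          have := mul_nonneg (hB0 n ω) hω
          simp only [Pi.add_apply, Pi.mul_apply] at this ⊢
          linarith)
    set f : α → ℝ := h * p.2 + a with hf
    have hBf : ∀ n, Integrable (fun ω => B n ω * (f ω + y ω)) μ ∧
        ∫ ω, B n ω * (f ω + y ω) ∂μ = ∫ ω, B n ω * y ω ∂μ := fun n => by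
      have heq : (fun ω => B n ω * (f ω + y ω))
          = fun ω => (B n ω * h ω * p.2 ω + (B n * a) ω) + B n ω * y ω := by
        funext ω; simp only [hf, Pi.add_apply, Pi.mul_apply]; ring
      rw [heq]
      refine ⟨((hint1 n).add (hIH n).1).add (hinty n), ?_⟩
      rw [integral_add (f := fun ω => B n ω * h ω * p.2 ω + (B n * a) ω)
        ((hint1 n).add (hIH n).1) (hinty n), integral_add (hint1 n) (hIH n).1,
        (hIH n).2, hz p List.mem_cons_self (fun ω => B n ω * h ω) ((hBm n).mul hh)
          ⟨n, hBh n⟩]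
      simp
    have hylim : Tendsto (fun n => ∫ ω, B n ω * y ω ∂μ) atTop (𝓝 (∫ ω, y ω ∂μ)) := by
      refine tendsto_integral_of_dominated_convergence (fun ω => |y ω|)
        (fun n => (hinty n).1) hy.abs (fun n => Eventually.of_forall fun ω => ?_)
        (Eventually.of_forall fun ω => ?_)
      · rw [norm_mul, Real.norm_eq_abs, Real.norm_eq_abs, abs_of_nonneg (hB0 n ω)]
        exact mul_le_of_le_one_left (abs_nonneg _) (hB1 n ω)
      · refine tendsto_const_nhds.congr' ?_
        filter_upwards [hBlim ω] with n hn
        rw [hn, one_mul]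
    have hflim : ∀ᵐ ω ∂μ, Tendsto (fun n => B n ω * (f ω + y ω)) atTop (𝓝 (f ω + y ω)) := by
      refine Eventually.of_forall fun ω => tendsto_const_nhds.congr' ?_
      filter_upwards [hBlim ω] with n hn
      rw [hn, one_mul]
    have hfy : Integrable (fun ω => f ω + y ω) μ := by
      refine ⟨aestronglyMeasurable_of_tendsto_ae _ (fun n => (hBf n).1.1) hflim, ?_⟩
      rw [HasFiniteIntegral, lintegral_congr_ae (g := fun ω =>
        liminf (fun n => ‖B n ω * (f ω + y ω)‖ₑ) atTop)
        (by filter_upwards [hflim] with ω hω using hω.enorm.liminf_eq.symm)]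
      refine (lintegral_liminf_le' fun n => (hBf n).1.1.aemeasurable.enorm).trans_lt ?_
      have hnorm : ∀ n, ∫⁻ ω, ‖B n ω * (f ω + y ω)‖ₑ ∂μ
          = ENNReal.ofReal (∫ ω, B n ω * y ω ∂μ) := fun n => by
        rw [← (hBf n).2, ofReal_integral_eq_lintegral_ofReal (hBf n).1 (by
          filter_upwards [hpos] with ω hω using mul_nonneg (hB0 n ω) hω)]
        refine lintegral_congr_ae ?_
        filter_upwards [hpos] with ω hω
        exact Real.enorm_of_nonneg (mul_nonneg (hB0 n ω) hω)
      simp_rw [hnorm]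
      rw [(ENNReal.tendsto_ofReal hylim).liminf_eq]
      exact ENNReal.ofReal_lt_top
    have hfi : Integrable f μ := by
      refine (hfy.sub hy).congr (Eventually.of_forall fun ω => ?_)
      simp
    refine ⟨hfi, ?_⟩
    have hlim2 : Tendsto (fun n => ∫ ω, B n ω * (f ω + y ω) ∂μ) atTop
        (𝓝 (∫ ω, (f ω + y ω) ∂μ)) := by
      refine tendsto_integral_of_dominated_convergence (fun ω => |f ω + y ω|)
        (fun n => (hBf n).1.1) hfy.abs (fun n => Eventually.of_forall fun ω => ?_) hflim
      rw [norm_mul, Real.norm_eq_abs, Real.norm_eq_abs, abs_of_nonneg (hB0 n ω)]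
      exact mul_le_of_le_one_left (abs_nonneg _) (hB1 n ω)
    simp_rw [fun n => (hBf n).2] at hlim2
    have := tendsto_nhds_unique hlim2 hylim
    rw [integral_add hfi hy] at this
    linarith

/-- Kreps–Yan theorem in `L²`. -/
lemma exists_pos_polar {α : Type*} {m0 : MeasurableSpace α} {μ : Measure α} [IsFiniteMeasure μ]
    {C : Set (Lp ℝ 2 μ)} (hclosed : IsClosed C) (hadd : ∀ f ∈ C, ∀ g ∈ C, f + g ∈ C)
    (hsmul : ∀ c : ℝ, 0 ≤ c → ∀ f ∈ C, c • f ∈ C)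
    (hneg : ∀ (B : Set α) (hB : MeasurableSet B),
      -indicatorConstLp 2 hB (measure_ne_top μ B) (1 : ℝ) ∈ C)
    (hpos : ∀ (B : Set α) (hB : MeasurableSet B),
      indicatorConstLp 2 hB (measure_ne_top μ B) (1 : ℝ) ∈ C → μ B = 0) :
    ∃ g : Lp ℝ 2 μ, (∀ᵐ ω ∂μ, 0 < g ω) ∧ ∀ f ∈ C, inner ℝ f g ≤ 0 := by
  set G : Set (Lp ℝ 2 μ) := {g | ∀ f ∈ C, inner ℝ f g ≤ 0} with hG
  have hint : ∀ g : Lp ℝ 2 μ, Integrable g μ := fun g =>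
    (Lp.memLp g).integrable (by norm_num)
  have hGadd : ∀ g ∈ G, ∀ g' ∈ G, g + g' ∈ G := fun g hg g' hg' f hf => by
    rw [inner_add_right]; linarith [hg f hf, hg' f hf]
  have hGnonneg : ∀ g ∈ G, 0 ≤ᵐ[μ] g := fun g hg =>
    ae_nonneg_of_forall_setIntegral_nonneg (hint g) fun B hB _ => by
      have := hg _ (hneg B hB)
      rw [inner_neg_left, L2.inner_indicatorConstLp_one] at this
      linarith
  have hGsep : ∀ B, MeasurableSet B → μ B ≠ 0 → ∃ g ∈ G, 0 < ∫ ω in B, g ω ∂μ := by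
    intro B hB hμB
    have hconv : Convex ℝ C := fun f hf g hg a b ha hb _ =>
      hadd _ (hsmul a ha f hf) _ (hsmul b hb g hg)
    obtain ⟨ℓ, u, hℓ, hu⟩ := geometric_hahn_banach_closed_point hconv hclosed
      (fun h => hμB (hpos B hB h))
    have h0 : (0 : Lp ℝ 2 μ) ∈ C := by
      simpa using hsmul 0 le_rfl _ (hneg B hB)
    have hu0 : 0 < u := by simpa using hℓ 0 h0
    refine ⟨(InnerProductSpace.toDual ℝ _).symm ℓ, fun f hf => ?_, ?_⟩
    · rw [real_inner_comm, InnerProductSpace.toDual_symm_apply]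
      by_contra! hlt
      have := hℓ _ (hsmul (u / ℓ f) (by positivity) f hf)
      rw [map_smul, smul_eq_mul, div_mul_cancel₀ _ hlt.ne'] at this
      exact lt_irrefl _ this
    · rw [← L2.inner_indicatorConstLp_one hB (measure_ne_top μ B), real_inner_comm,
        InnerProductSpace.toDual_symm_apply]
      exact hu0.trans hu
  -- exhaustion
  have hms : ∀ g : Lp ℝ 2 μ, MeasurableSet {ω | 0 < g ω} := fun g =>
    measurableSet_lt measurable_const (Lp.stronglyMeasurable g).measurable
  set S : Set ℝ := (fun g : Lp ℝ 2 μ => μ.real {ω | 0 < g ω}) '' G with hS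
  have hSbdd : BddAbove S := ⟨μ.real Set.univ, by
    rintro _ ⟨g, _, rfl⟩; exact measureReal_mono (Set.subset_univ _)⟩
  have hSne : S.Nonempty := ⟨_, 0, fun f _ => by simp, rfl⟩
  obtain ⟨s, -, hs, hsS⟩ := exists_seq_tendsto_sSup hSne hSbdd
  choose g hgG hgs using hsS
  set c : ℕ → ℝ := fun n => (1 / 2) ^ n / (1 + ‖g n‖) with hc
  have hcpos : ∀ n, 0 < c n := fun n => by positivity
  have hsummable : Summable fun n => c n • g n := by
    refine Summable.of_norm_bounded (g := fun n : ℕ => (1 / 2 : ℝ) ^ n)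
      (summable_geometric_of_lt_one (by norm_num) (by norm_num)) fun n => ?_
    rw [norm_smul, Real.norm_of_nonneg (hcpos n).le, hc, div_mul_eq_mul_div,
      div_le_iff₀ (by positivity)]
    have : (0 : ℝ) ≤ (1 / 2) ^ n := by positivity
    nlinarith [norm_nonneg (g n)]
  set G0 : Lp ℝ 2 μ := ∑' n, c n • g n with hG0
  have hinner : ∀ f : Lp ℝ 2 μ, HasSum (fun n => c n * inner ℝ f (g n)) (inner ℝ f G0) := by
    intro f
    have := (innerSL ℝ f).hasSum hsummable.hasSum
    simpa [Function.comp_def, inner_smul_right] using this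
  have hG0G : G0 ∈ G := fun f hf => (hinner f).nonpos fun n =>
    mul_nonpos_of_nonneg_of_nonpos (hcpos n).le (hgG n f hf)
  have hsub : ∀ n, ∀ᵐ ω ∂μ, 0 < g n ω → 0 < G0 ω := by
    intro n
    set B : Set α := {ω | 0 < G0 ω}ᶜ with hB
    have hBm : MeasurableSet B := (hms G0).compl
    have hsum := hinner (indicatorConstLp 2 hBm (measure_ne_top μ B) (1 : ℝ))
    simp only [L2.inner_indicatorConstLp_one] at hsum
    have hnn : ∀ k, 0 ≤ ∫ ω in B, g k ω ∂μ := fun k =>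
      integral_nonneg_of_ae (ae_restrict_of_ae (hGnonneg _ (hgG k)))
    have hle : ∫ ω in B, G0 ω ∂μ ≤ 0 :=
      setIntegral_nonpos hBm fun ω hω => not_lt.1 hω
    have h1 : c n * ∫ ω in B, g n ω ∂μ ≤ 0 :=
      (le_hasSum hsum n fun k _ => mul_nonneg (hcpos k).le (hnn k)).trans hle
    have h2 : ∫ ω in B, g n ω ∂μ = 0 :=
      le_antisymm (nonpos_of_mul_nonpos_right h1 (hcpos n)) (hnn n)
    rw [setIntegral_eq_zero_iff_of_nonneg_ae (ae_restrict_of_ae (hGnonneg _ (hgG n)))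
      (hint _).integrableOn] at h2
    filter_upwards [(ae_restrict_iff' hBm).1 h2] with ω hω hpos
    by_contra hcon
    exact hpos.ne' (hω hcon)
  have hmax : μ.real {ω | 0 < G0 ω} = sSup S := by
    refine le_antisymm (le_csSup hSbdd ⟨G0, hG0G, rfl⟩) (le_of_tendsto hs ?_)
    refine Eventually.of_forall fun n => ?_
    rw [← hgs n]
    exact ENNReal.toReal_mono (measure_ne_top _ _) (measure_mono_ae (hsub n))
  refine ⟨G0, ?_, hG0G⟩
  by_contra hcon
  obtain ⟨g', hg'G, hg'⟩ := hGsep {ω | 0 < G0 ω}ᶜ (hms G0).compl hcon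
  have hge := le_csSup hSbdd ⟨G0 + g', hGadd _ hG0G _ hg'G, rfl⟩
  rw [← hmax] at hge
  have hincl : ({ω | 0 < G0 ω} : Set α) ≤ᵐ[μ] {ω | 0 < (G0 + g') ω} := by
    filter_upwards [hGnonneg _ hg'G, Lp.coeFn_add G0 g'] with ω h1 h2 (h3 : 0 < G0 ω)
    change 0 < (G0 + g') ω
    rw [h2, Pi.add_apply]
    exact add_pos_of_pos_of_nonneg h3 h1
  have heq : ({ω | 0 < G0 ω} : Set α) =ᵐ[μ] {ω | 0 < (G0 + g') ω} :=
    ae_eq_of_ae_subset_of_measure_ge hincl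
      ((ENNReal.toReal_le_toReal (measure_ne_top _ _) (measure_ne_top _ _)).1 hge)
      (hms _).nullMeasurableSet (measure_ne_top _ _)
  refine hg'.not_ge (integral_nonpos_of_ae ?_)
  rw [EventuallyLE, ae_restrict_iff' (hms G0).compl]
  filter_upwards [heq.mem_iff, hGnonneg _ hG0G, Lp.coeFn_add G0 g'] with ω h1 h2 h3 h4
  simp only [Pi.zero_apply] at h1 h2 ⊢
  by_contra! h5
  refine h4 (h1.2 ?_)
  rw [h3, Pi.add_apply]
  exact add_pos_of_nonneg_of_pos h2 h5

/-- A strictly positive deflator for a linear space of gains without arbitrage whose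
dominated hull is closed. -/
lemma exists_deflator {α : Type*} {m0 : MeasurableSpace α} {μ : Measure α} [IsFiniteMeasure μ]
    {A : Set (α → ℝ)} (hcl : HullClosed μ A) (hzero : 0 ∈ A)
    (hadd : ∀ a ∈ A, ∀ b ∈ A, a + b ∈ A) (hsmul : ∀ c : ℝ, ∀ a ∈ A, c • a ∈ A)
    (hNA : ∀ a ∈ A, 0 ≤ᵐ[μ] a → a =ᵐ[μ] 0) {φ : α → ℝ} (hφ : Measurable φ)
    (hφ1 : ∀ ω, 1 ≤ φ ω) :
    ∃ Z : α → ℝ, Measurable Z ∧ (∀ᵐ ω ∂μ, 0 < Z ω) ∧ Integrable (fun ω => Z ω * φ ω) μ ∧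
      ∀ a ∈ A, AEStronglyMeasurable a μ → (∃ c, ∀ ω, |a ω| ≤ c * φ ω) →
        ∫ ω, Z ω * a ω ∂μ = 0 := by
  have hφ0 : ∀ ω, 0 < φ ω := fun ω => one_pos.trans_le (hφ1 ω)
  set C : Set (Lp ℝ 2 μ) := {f | ∃ a ∈ A, (fun ω => φ ω * f ω) ≤ᵐ[μ] a} with hC
  have hclosed : IsClosed C := by
    refine isClosed_of_closure_subset fun f hf => ?_
    obtain ⟨u, hu, hlim⟩ := mem_closure_iff_seq_limit.1 hf
    obtain ⟨ns, -, hns⟩ := (tendstoInMeasure_of_tendsto_Lp hlim).exists_seq_tendsto_ae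
    refine hcl (fun n ω => φ ω * u (ns n) ω) _ (fun n => hu (ns n)) ?_
    filter_upwards [hns] with ω hω
    exact hω.const_mul _
  obtain ⟨g, hg, hgC⟩ := exists_pos_polar hclosed
    (by
      rintro f ⟨a, ha, hfa⟩ f' ⟨a', ha', hfa'⟩
      refine ⟨a + a', hadd a ha a' ha', ?_⟩
      filter_upwards [hfa, hfa', Lp.coeFn_add f f'] with ω h1 h2 h3
      rw [h3, Pi.add_apply, Pi.add_apply, mul_add]
      exact add_le_add h1 h2)
    (by
      rintro c hc f ⟨a, ha, hfa⟩
      refine ⟨c • a, hsmul c a ha, ?_⟩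
      filter_upwards [hfa, Lp.coeFn_smul c f] with ω h1 h2
      rw [h2, Pi.smul_apply, Pi.smul_apply, smul_eq_mul, smul_eq_mul, mul_left_comm]
      exact mul_le_mul_of_nonneg_left h1 hc)
    (by
      intro B hB
      refine ⟨0, hzero, ?_⟩
      filter_upwards [Lp.coeFn_neg (indicatorConstLp 2 hB (measure_ne_top μ B) (1 : ℝ)),
        indicatorConstLp_coeFn (p := 2) (hs := hB) (hμs := measure_ne_top μ B) (c := (1 : ℝ))]
        with ω h1 h2
      rw [h1, Pi.neg_apply, h2, Pi.zero_apply, mul_neg, neg_nonpos]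
      exact mul_nonneg (hφ0 ω).le (Set.indicator_nonneg (fun _ _ => zero_le_one) ω))
    (by
      rintro B hB ⟨a, ha, hBa⟩
      have hae : ∀ᵐ ω ∂μ, φ ω * B.indicator (fun _ => 1) ω ≤ a ω := by
        filter_upwards [hBa,
          indicatorConstLp_coeFn (p := 2) (hs := hB) (hμs := measure_ne_top μ B) (c := (1 : ℝ))]
          with ω h1 h2
        rwa [h2] at h1
      have ha0 := hNA a ha (by
        filter_upwards [hae] with ω hω
        exact (mul_nonneg (hφ0 ω).le (Set.indicator_nonneg (fun _ _ => zero_le_one) ω)).trans hω)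
      rw [measure_eq_zero_iff_ae_notMem]
      filter_upwards [hae, ha0] with ω h1 h2 h3
      rw [h2, Set.indicator_of_mem h3, mul_one] at h1
      exact (hφ0 ω).not_ge h1)
  have hle : ∀ a ∈ A, AEStronglyMeasurable a μ → (∃ c, ∀ ω, |a ω| ≤ c * φ ω) →
      ∫ ω, g ω / φ ω * a ω ∂μ ≤ 0 := by
    rintro a ha ham ⟨c, hc⟩
    have hmem : MemLp (fun ω => a ω / φ ω) 2 μ :=
      MemLp.of_bound (ham.mul hφ.inv.aestronglyMeasurable) c (Eventually.of_forall fun ω => by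
        rw [Real.norm_eq_abs, abs_div, abs_of_pos (hφ0 ω), div_le_iff₀ (hφ0 ω)]
        exact hc ω)
    have := hgC hmem.toLp ⟨a, ha, by
      filter_upwards [hmem.coeFn_toLp] with ω hω
      rw [hω, mul_div_cancel₀ _ (hφ0 ω).ne']⟩
    rw [L2.inner_def] at this
    refine (le_of_eq (integral_congr_ae ?_)).trans this
    filter_upwards [hmem.coeFn_toLp] with ω hω
    rw [hω]
    simp only [RCLike.inner_apply, conj_trivial]
    ring
  refine ⟨fun ω => g ω / φ ω, (Lp.stronglyMeasurable g).measurable.div hφ, ?_, ?_, ?_⟩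
  · filter_upwards [hg] with ω hω using div_pos hω (hφ0 ω)
  · refine ((Lp.memLp g).integrable (by norm_num)).congr (Eventually.of_forall fun ω => ?_)
    exact (div_mul_cancel₀ _ (hφ0 ω).ne').symm
  · rintro a ha ham ⟨c, hc⟩
    refine le_antisymm (hle a ha ham ⟨c, hc⟩) ?_
    have := hle ((-1 : ℝ) • a) (hsmul _ a ha) (ham.const_smul _)
      ⟨c, fun ω => by simpa using hc ω⟩
    simp only [Pi.smul_apply, smul_eq_mul, neg_mul, one_mul, mul_neg, integral_neg] at this
    linarith

/-- The `σ`-algebra on `Fin N × Ω` whose sections are measurable for the given `σ`-algebras. -/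
@[reducible] def jointSpace {Ω : Type*} {N : ℕ} (G : Fin N → MeasurableSpace Ω) :
    MeasurableSpace (Σ _ : Fin N, Ω) :=
  @Sigma.instMeasurableSpace _ _ G

lemma measurable_jointSpace {Ω : Type*} {N : ℕ} {G : Fin N → MeasurableSpace Ω} {β : Type*}
    [MeasurableSpace β] {f : (Σ _ : Fin N, Ω) → β} :
    Measurable[jointSpace G] f ↔ ∀ i, Measurable[G i] fun ω => f ⟨i, ω⟩ := by
  constructor
  · intro hf i s hs
    exact MeasurableSpace.measurableSet_iInf.1 (hf hs) i
  · intro hf s hs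
    exact MeasurableSpace.measurableSet_iInf.2 fun i => hf i hs

lemma jointSpace_mono {Ω : Type*} {N : ℕ} {G G' : Fin N → MeasurableSpace Ω}
    (h : ∀ i, G i ≤ G' i) : jointSpace G ≤ jointSpace G' := fun _ hs =>
  MeasurableSpace.measurableSet_iInf.2 fun i =>
    h i _ (MeasurableSpace.measurableSet_iInf.1 hs i)

lemma measurable_sigma_iff {Ω : Type*} [MeasurableSpace Ω] {N : ℕ} {β : Type*}
    [MeasurableSpace β] {f : (Σ _ : Fin N, Ω) → β} :
    Measurable f ↔ ∀ i, Measurable fun ω => f ⟨i, ω⟩ :=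
  measurable_jointSpace (G := fun _ => ‹MeasurableSpace Ω›)

lemma measurableEmbedding_sigmaMk {Ω : Type*} [MeasurableSpace Ω] {N : ℕ} (i : Fin N) :
    MeasurableEmbedding (fun ω => (⟨i, ω⟩ : Σ _ : Fin N, Ω)) where
  injective := fun _ _ h => by simpa using h
  measurable := measurable_sigma_iff.1 measurable_id i
  measurableSet_image' := by
    intro s hs
    refine MeasurableSpace.measurableSet_iInf.2 fun j => ?_
    change MeasurableSet ((fun ω => (⟨j, ω⟩ : Σ _ : Fin N, Ω)) ⁻¹' _)
    rcases eq_or_ne j i with rfl | hji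
    · rwa [Set.preimage_image_eq _ fun _ _ h => by simpa using h]
    · convert MeasurableSet.empty
      ext ω
      simp [hji.symm]

/-- The measure on `Fin N × Ω` with the given sections. -/
noncomputable def jointMeasure {Ω : Type*} [MeasurableSpace Ω] {N : ℕ}
    (Q : Fin N → Measure Ω) : Measure (Σ _ : Fin N, Ω) :=
  ∑ i, (Q i).map fun ω => ⟨i, ω⟩

lemma ae_jointMeasure {Ω : Type*} [MeasurableSpace Ω] {N : ℕ} {Q : Fin N → Measure Ω}
    {p : (Σ _ : Fin N, Ω) → Prop} :
    (∀ᵐ x ∂jointMeasure Q, p x) ↔ ∀ i, ∀ᵐ ω ∂Q i, p ⟨i, ω⟩ := by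
  rw [jointMeasure, ← Measure.sum_fintype, Measure.ae_sum_iff]
  exact forall_congr' fun i => (measurableEmbedding_sigmaMk i).ae_map_iff

lemma integrable_jointMeasure {Ω : Type*} [MeasurableSpace Ω] {N : ℕ} {Q : Fin N → Measure Ω}
    {f : (Σ _ : Fin N, Ω) → ℝ} :
    Integrable f (jointMeasure Q) ↔ ∀ i, Integrable (fun ω => f ⟨i, ω⟩) (Q i) := by
  rw [jointMeasure, integrable_finsetSum_measure]
  simp only [Finset.mem_univ, true_implies]
  exact forall_congr' fun i => (measurableEmbedding_sigmaMk i).integrable_map_iff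

lemma integral_jointMeasure {Ω : Type*} [MeasurableSpace Ω] {N : ℕ} {Q : Fin N → Measure Ω}
    {f : (Σ _ : Fin N, Ω) → ℝ} (hf : Integrable f (jointMeasure Q)) :
    ∫ x, f x ∂jointMeasure Q = ∑ i, ∫ ω, f ⟨i, ω⟩ ∂Q i := by
  rw [jointMeasure, integrable_finsetSum_measure] at hf
  rw [jointMeasure, integral_finsetSum_measure hf]
  exact Finset.sum_congr rfl fun i _ => (measurableEmbedding_sigmaMk i).integral_map f

instance {Ω : Type*} [MeasurableSpace Ω] {N : ℕ} {Q : Fin N → Measure Ω}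
    [∀ i, IsFiniteMeasure (Q i)] : IsFiniteMeasure (jointMeasure Q) := by
  unfold jointMeasure
  infer_instance

/-- The one-period price increment of asset `j`, for the agents who trade it. -/
def priceStep {Ω : Type*} {J N : ℕ} (assets : Fin N → Finset (Fin J))
    (X : Fin J → ℕ → Ω → ℝ) (j : Fin J) (s : ℕ) (x : Σ _ : Fin N, Ω) : ℝ :=
  if j ∈ assets x.1 then X j (s + 1) x.2 - X j s x.2 else 0

/-- The deterministic zero-sum exchange paying one unit to agent `r`, financed equally. -/
noncomputable def unitExchange {Ω : Type*} {N : ℕ} (r : Fin N) (x : Σ _ : Fin N, Ω) : ℝ :=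
  (if x.1 = r then 1 else 0) - 1 / N

/-- All elementary trades: the static exchanges, then the asset trades in order of time. -/
noncomputable def trades {Ω : Type*} {J N : ℕ} (F : Fin N → ℕ → MeasurableSpace Ω) (T : ℕ)
    (assets : Fin N → Finset (Fin J)) (X : Fin J → ℕ → Ω → ℝ) (y : Fin N → Ω → ℝ) :
    List (MeasurableSpace (Σ _ : Fin N, Ω) × ((Σ _ : Fin N, Ω) → ℝ)) :=
  ((⊥, fun x => y x.1 x.2) :: (List.finRange N).map fun r => (⊥, unitExchange r)) ++
    (List.range T).flatMap fun s => (List.finRange J).map fun j =>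
      (jointSpace fun i => F i s, priceStep assets X j s)

lemma mem_trades {Ω : Type*} {J N : ℕ} {F : Fin N → ℕ → MeasurableSpace Ω} {T : ℕ}
    {assets : Fin N → Finset (Fin J)} {X : Fin J → ℕ → Ω → ℝ} {y : Fin N → Ω → ℝ}
    {p : MeasurableSpace (Σ _ : Fin N, Ω) × ((Σ _ : Fin N, Ω) → ℝ)} :
    p ∈ trades F T assets X y ↔ p = (⊥, fun x => y x.1 x.2) ∨
      (∃ r, p = (⊥, unitExchange r)) ∨
      ∃ s < T, ∃ j, p = (jointSpace fun i => F i s, priceStep assets X j s) := by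
  simp [trades, eq_comm]

lemma pairwise_trades {Ω : Type*} {J N : ℕ} {F : Fin N → ℕ → MeasurableSpace Ω}
    (hF : ∀ i, Monotone (F i)) (T : ℕ)
    (assets : Fin N → Finset (Fin J)) (X : Fin J → ℕ → Ω → ℝ) (y : Fin N → Ω → ℝ) :
    (trades F T assets X y).Pairwise fun p q => p.1 ≤ q.1 := by
  rw [trades, List.pairwise_append]
  refine ⟨?_, ?_, ?_⟩
  · rw [List.pairwise_cons]
    refine ⟨fun _ _ => bot_le, ?_⟩
    rw [List.pairwise_map]
    exact List.pairwise_of_forall fun _ _ => le_rfl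
  · rw [List.pairwise_flatMap]
    refine ⟨fun s _ => ?_, ?_⟩
    · rw [List.pairwise_map]
      exact List.pairwise_of_forall fun _ _ => le_rfl
    · refine List.pairwise_lt_range.imp fun {s t} hst => ?_
      simp only [List.mem_map]
      rintro _ ⟨j, -, rfl⟩ _ ⟨j', -, rfl⟩
      exact jointSpace_mono fun i => hF i hst.le
  · intro p hp q _
    have : p.1 = ⊥ := by
      simp only [List.mem_cons, List.mem_map] at hp
      rcases hp with rfl | ⟨r, -, rfl⟩ <;> rfl
    rw [this]
    exact bot_le

lemma exists_eq_const_of_measurable_bot {α : Type*} {h : α → ℝ} (hh : Measurable[⊥] h) :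
    ∃ c, h = fun _ => c := by
  rcases isEmpty_or_nonempty α with hα | ⟨⟨x⟩⟩
  · exact ⟨0, funext fun x => hα.elim x⟩
  · refine ⟨h x, funext fun z => ?_⟩
    rcases MeasurableSpace.measurableSet_bot_iff.1 (hh (measurableSet_singleton (h x))) with h1 | h1
    · exact absurd (show x ∈ h ⁻¹' {h x} from rfl) (by simp [h1])
    · exact (h1 ▸ Set.mem_univ z : z ∈ h ⁻¹' {h x})

lemma zero_mem_gainsSet {Ω : Type*} {J : ℕ} (F : ℕ → MeasurableSpace Ω) (T : ℕ)
    (A : Finset (Fin J)) (X : Fin J → ℕ → Ω → ℝ) : (fun _ => 0) ∈ gainsSet F T A X :=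
  ⟨0, fun _ _ _ _ _ => measurable_const, by simp⟩

lemma add_mem_gainsSet {Ω : Type*} {J : ℕ} {F : ℕ → MeasurableSpace Ω} {T : ℕ}
    {A : Finset (Fin J)} {X : Fin J → ℕ → Ω → ℝ} {k k' : Ω → ℝ}
    (hk : k ∈ gainsSet F T A X) (hk' : k' ∈ gainsSet F T A X) :
    (fun ω => k ω + k' ω) ∈ gainsSet F T A X := by
  obtain ⟨H, hH, rfl⟩ := hk
  obtain ⟨H', hH', rfl⟩ := hk'
  refine ⟨fun j s ω => H j s ω + H' j s ω,
    fun j hj s hs hsT => (hH j hj s hs hsT).add (hH' j hj s hs hsT), ?_⟩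
  funext ω
  simp only [add_mul, Finset.sum_add_distrib]

lemma mul_increment_mem_gainsSet {Ω : Type*} {J : ℕ} {F : ℕ → MeasurableSpace Ω} {T : ℕ}
    {A : Finset (Fin J)} {X : Fin J → ℕ → Ω → ℝ} {j : Fin J} (hj : j ∈ A) {s : ℕ} (hs : s < T)
    {h : Ω → ℝ} (hh : Measurable[F s] h) :
    (fun ω => h ω * (X j (s + 1) ω - X j s ω)) ∈ gainsSet F T A X := by
  classical
  refine ⟨fun j' s' ω => if j' = j ∧ s' = s + 1 then h ω else 0, fun j' _ s' _ _ => ?_, ?_⟩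
  · by_cases hc : j' = j ∧ s' = s + 1
    · obtain ⟨rfl, rfl⟩ := hc
      simpa using hh
    · simp only [if_neg hc]
      exact measurable_const
  · funext ω
    rw [Finset.sum_eq_single_of_mem j hj, Finset.sum_eq_single_of_mem (s + 1)]
    · simp
    · simp only [Finset.mem_Icc]; omega
    · intro t _ ht; simp [ht]
    · intro i _ hi; simp [hi]

/-- Gains from the elementary trades are gains of the agents plus an exchange. -/
lemma exists_of_mem_gains_trades {Ω : Type*} {J N : ℕ} (hN : 1 ≤ N)
    {F : Fin N → ℕ → MeasurableSpace Ω} {T : ℕ}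
    {assets : Fin N → Finset (Fin J)} {X : Fin J → ℕ → Ω → ℝ} {𝒴 : Set (Fin N → Ω → ℝ)}
    (h𝒴R0 : zeroSum Ω N ⊆ 𝒴)
    (h𝒴add : ∀ y ∈ 𝒴, ∀ z ∈ 𝒴, (fun i ω => y i ω + z i ω) ∈ 𝒴)
    (h𝒴smul : ∀ y ∈ 𝒴, ∀ c : ℝ, (fun i ω => c * y i ω) ∈ 𝒴)
    {y : Fin N → Ω → ℝ} (hy : y ∈ 𝒴) {a : (Σ _ : Fin N, Ω) → ℝ}
    (ha : a ∈ gains (trades F T assets X y)) :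
    ∃ k : Fin N → Ω → ℝ, ∃ z ∈ 𝒴, (∀ i, k i ∈ gainsSet (F i) T (assets i) X) ∧
      ∀ i ω, a ⟨i, ω⟩ = k i ω + z i ω := by
  have h0 : (fun _ _ => 0 : Fin N → Ω → ℝ) ∈ 𝒴 := h𝒴R0 ⟨0, by simp, fun i => rfl⟩
  refine gains_subset (S := {a | ∃ k : Fin N → Ω → ℝ, ∃ z ∈ 𝒴,
    (∀ i, k i ∈ gainsSet (F i) T (assets i) X) ∧ ∀ i ω, a ⟨i, ω⟩ = k i ω + z i ω})
    ?_ ?_ ?_ ha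
  · exact ⟨fun _ _ => 0, _, h0, fun i => zero_mem_gainsSet _ _ _ _, by simp⟩
  · rintro a ⟨k, z, hz, hk, h⟩ a' ⟨k', z', hz', hk', h'⟩
    refine ⟨_, _, h𝒴add z hz z' hz', fun i => add_mem_gainsSet (hk i) (hk' i), fun i ω => ?_⟩
    rw [Pi.add_apply, h, h']
    ring
  · intro p hp h hh
    rcases mem_trades.1 hp with rfl | ⟨r, rfl⟩ | ⟨s, hs, j, rfl⟩
    · obtain ⟨c, rfl⟩ := exists_eq_const_of_measurable_bot hh
      exact ⟨fun _ _ => 0, _, h𝒴smul y hy c, fun i => zero_mem_gainsSet _ _ _ _, by simp⟩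
    · obtain ⟨c, rfl⟩ := exists_eq_const_of_measurable_bot hh
      refine ⟨fun _ _ => 0, _, h𝒴smul (fun i ω => unitExchange r ⟨i, ω⟩)
        (h𝒴R0 ⟨fun i => (if i = r then 1 else 0) - 1 / N, ?_, fun i => rfl⟩) c,
        fun i => zero_mem_gainsSet _ _ _ _, by simp⟩
      have : (N : ℝ) ≠ 0 := by positivity
      simp [Finset.sum_sub_distrib, this]
    · refine ⟨fun i ω => h ⟨i, ω⟩ * priceStep assets X j s ⟨i, ω⟩, _, h0, fun i => ?_,
        by simp⟩
      by_cases hj : j ∈ assets i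
      · simp only [priceStep, if_pos hj]
        exact mul_increment_mem_gainsSet hj hs (measurable_jointSpace.1 hh i)
      · simp only [priceStep, if_neg hj, mul_zero]
        exact zero_mem_gainsSet _ _ _ _

lemma mem_gains_trades {Ω : Type*} {J N : ℕ}
    {F : Fin N → ℕ → MeasurableSpace Ω} {T : ℕ}
    {assets : Fin N → Finset (Fin J)} {X : Fin J → ℕ → Ω → ℝ}
    {k : Fin N → Ω → ℝ} (y : Fin N → Ω → ℝ)
    (hk : ∀ i, k i ∈ gainsSet (F i) T (assets i) X) :
    (fun x => k x.1 x.2 + y x.1 x.2) ∈ gains (trades F T assets X y) := by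
  classical
  choose H hH hkH using hk
  have hy := mul_trade_mem_gains
    (mem_trades.2 (Or.inl rfl) : (⊥, fun x => y x.1 x.2) ∈ trades F T assets X y)
    (h := fun _ => 1) measurable_const
  have hdyn := sum_mem_gains (L := trades F T assets X y) (Finset.range T ×ˢ Finset.univ)
    (fun q : ℕ × Fin J => (fun x => if q.2 ∈ assets x.1 then H x.1 q.2 (q.1 + 1) x.2 else 0) *
      priceStep assets X q.2 q.1) (by
      rintro ⟨s, j⟩ hs
      have hs' : s < T := by simpa using hs
      refine mul_trade_mem_gains (p := (jointSpace fun i => F i s, priceStep assets X j s))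
        (mem_trades.2 (Or.inr (Or.inr ⟨s, hs', j, rfl⟩))) ?_
      refine measurable_jointSpace.2 fun i => ?_
      by_cases hj : j ∈ assets i
      · simp only [if_pos hj]
        exact hH i j hj (s + 1) (by omega) (by omega)
      · simp only [if_neg hj]
        exact measurable_const)
  convert add_mem_gains hdyn hy using 1
  funext ⟨i, ω⟩
  simp only [Pi.add_apply, Finset.sum_apply, Pi.mul_apply, one_mul, add_left_inj, hkH i]
  rw [Finset.sum_product, Finset.sum_comm]
  have hshift : ∀ f : ℕ → ℝ, ∑ s ∈ Finset.Icc 1 T, f s = ∑ s ∈ Finset.range T, f (s + 1) := by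
    intro f
    rw [Finset.range_eq_Ico, Finset.sum_Ico_add' f 0 T 1]
    rfl
  rw [hshift]
  refine Finset.sum_congr rfl fun s _ => ?_
  simp only [priceStep, ite_mul_ite, mul_zero, Nat.add_sub_cancel]
  simp [Finset.sum_ite_mem]

/-- The probability measure with density proportional to an a.e. positive function. -/
lemma exists_tilted_measure {Ω : Type*} [MeasurableSpace Ω] (P : Measure Ω)
    [IsProbabilityMeasure P] {Z : Ω → ℝ} (hZ : Measurable Z) (hZpos : ∀ᵐ ω ∂P, 0 < Z ω)
    (hZint : Integrable Z P) :
    ∃ Q : Measure Ω, IsProbabilityMeasure Q ∧ Q ≪ P ∧ P ≪ Q ∧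
      (∀ f : Ω → ℝ, Integrable (fun ω => Z ω * f ω) P → Integrable f Q) ∧
      ∀ f : Ω → ℝ, ∫ ω, f ω ∂Q = (∫ ω, Z ω ∂P)⁻¹ * ∫ ω, Z ω * f ω ∂P := by
  set c := ∫ ω, Z ω ∂P with hc
  have hc0 : 0 < c := by
    rw [hc, integral_pos_iff_support_of_nonneg_ae (hZpos.mono fun _ h => h.le) hZint]
    refine pos_iff_ne_zero.2 fun h0 => ?_
    obtain ⟨ω, h1, h2⟩ := ((measure_eq_zero_iff_ae_notMem.1 h0).and hZpos).exists
    exact h1 h2.ne'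
  have hdm : Measurable fun ω => ENNReal.ofReal (c⁻¹ * Z ω) :=
    (measurable_const.mul hZ).ennreal_ofReal
  have hreal : ∀ f : Ω → ℝ, (fun ω => (ENNReal.ofReal (c⁻¹ * Z ω)).toReal • f ω)
      =ᵐ[P] fun ω => c⁻¹ * (Z ω * f ω) := fun f => by
    filter_upwards [hZpos] with ω hω
    rw [ENNReal.toReal_ofReal (by positivity), smul_eq_mul, mul_assoc]
  refine ⟨P.withDensity fun ω => ENNReal.ofReal (c⁻¹ * Z ω), ⟨?_⟩,
    withDensity_absolutelyContinuous _ _, withDensity_absolutelyContinuous' hdm.aemeasurable ?_,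
    fun f hf => ?_, fun f => ?_⟩
  · rw [withDensity_apply _ MeasurableSet.univ, Measure.restrict_univ,
      ← ofReal_integral_eq_lintegral_ofReal (hZint.const_mul _)
        (hZpos.mono fun ω h => by simp only [Pi.zero_apply]; positivity),
      integral_const_mul, ← hc, inv_mul_cancel₀ hc0.ne', ENNReal.ofReal_one]
  · filter_upwards [hZpos] with ω hω
    exact (ENNReal.ofReal_pos.2 (by positivity)).ne'
  · rw [integrable_withDensity_iff_integrable_smul' hdm (by simp)]
    exact (hf.const_mul _).congr (hreal f).symm
  · rw [integral_withDensity_eq_integral_toReal_smul hdm (by simp), integral_congr_ae (hreal f),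
      integral_const_mul]

lemma martingale_of_forall_increment {Ω : Type*} {m0 : MeasurableSpace Ω} {Q : Measure Ω}
    [IsProbabilityMeasure Q] {F : ℕ → MeasurableSpace Ω} (hF : Monotone F)
    (hFle : ∀ t, F t ≤ m0) {T : ℕ} {x : ℕ → Ω → ℝ} (hx : ∀ t ≤ T, Measurable[F t] (x t))
    (hint : ∀ t ≤ T, Integrable (x t) Q)
    (hinc : ∀ s < T, ∀ B, MeasurableSet[F s] B → ∫ ω in B, (x (s + 1) ω - x s ω) ∂Q = 0)
    {s t : ℕ} (hst : s ≤ t) (htT : t ≤ T) : x s =ᵐ[Q] Q[x t | F s] := by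
  have key : ∀ B, MeasurableSet[F s] B → ∫ ω in B, x s ω ∂Q = ∫ ω in B, x t ω ∂Q := by
    intro B hB
    induction t, hst using Nat.le_induction with
    | base => rfl
    | succ t hst ih =>
      have h := hinc t (by omega) B (hF hst B hB)
      rw [integral_sub (hint _ htT).integrableOn (hint t (by omega)).integrableOn] at h
      rw [ih (by omega)]
      linarith
  exact ae_eq_condExp_of_forall_setIntegral_eq (hFle s) (hint t htT)
    (fun _ _ _ => (hint s (hst.trans htT)).integrableOn) (fun B hB _ => key B hB)
    (hx s (hst.trans htT)).stronglyMeasurable.aestronglyMeasurable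

lemma integral_mul_increment_eq_zero {Ω : Type*} {m0 : MeasurableSpace Ω} {Q : Measure Ω}
    [IsProbabilityMeasure Q] {𝓗 : MeasurableSpace Ω} (h𝓗 : 𝓗 ≤ m0) {x x' : Ω → ℝ}
    (hx : Integrable x Q) (hx' : Integrable x' Q) (hmart : x =ᵐ[Q] Q[x' | 𝓗])
    {h : Ω → ℝ} (hh : Measurable[𝓗] h) {c : ℝ} (hc : ∀ ω, |h ω| ≤ c) :
    ∫ ω, h ω * (x' ω - x ω) ∂Q = 0 := by
  have hbdd : ∀ z : Ω → ℝ, Integrable z Q → Integrable (h * z) Q := fun z hz =>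
    hz.bdd_mul (hh.mono h𝓗 le_rfl).aestronglyMeasurable (Eventually.of_forall hc)
  have hce : Q[h * x' | 𝓗] =ᵐ[Q] h * Q[x' | 𝓗] :=
    condExp_mul_of_stronglyMeasurable_left hh.stronglyMeasurable (hbdd x' hx') hx'
  have h1 : ∫ ω, (h * x') ω ∂Q = ∫ ω, (h * x) ω ∂Q := by
    rw [← integral_condExp h𝓗]
    refine integral_congr_ae ?_
    filter_upwards [hce, hmart] with ω h2 h3
    rw [h2, Pi.mul_apply, Pi.mul_apply, h3]
  have h2 := integral_sub (hbdd x' hx') (hbdd x hx)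
  rw [h1, sub_self] at h2
  rw [← h2]
  refine integral_congr_ae (Eventually.of_forall fun ω => ?_)
  simp only [Pi.mul_apply]
  ring

lemma measurable_indicator_one {Ω : Type*} {𝓗 : MeasurableSpace Ω} {B : Set Ω}
    (hB : MeasurableSet B) : Measurable fun ω => B.indicator (1 : Ω → ℝ) ω :=
  measurable_one.indicator hB

lemma unitExchange_mk {Ω : Type*} {N : ℕ} (r i : Fin N) (ω : Ω) :
    unitExchange r ⟨i, ω⟩ = (if i = r then (1 : ℝ) else 0) - 1 / N := rfl

lemma abs_unitExchange_le_one {Ω : Type*} {N : ℕ} (r : Fin N) (x : Σ _ : Fin N, Ω) :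
    |unitExchange r x| ≤ 1 := by
  have hN : (1 : ℝ) ≤ N := by exact_mod_cast r.pos
  have h1 : (1 : ℝ) / N ≤ 1 := (div_le_one (by positivity)).2 hN
  have h0 : (0 : ℝ) ≤ 1 / N := by positivity
  unfold unitExchange
  split_ifs <;> rw [abs_le] <;> constructor <;> linarith

/-- No collective arbitrage yields collective martingale measures for one exchange. -/
lemma NCA.nonempty_MeY {Ω : Type*} {m0 : MeasurableSpace Ω} {P : Measure Ω}
    [IsProbabilityMeasure P] {T J N : ℕ} (hN : 1 ≤ N) {F : Fin N → ℕ → MeasurableSpace Ω}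
    (hFmono : ∀ i, Monotone (F i)) (hFle : ∀ i t, F i t ≤ m0) {X : Fin J → ℕ → Ω → ℝ}
    {assets : Fin N → Finset (Fin J)}
    (hadapted : ∀ i, ∀ j ∈ assets i, ∀ t, t ≤ T → Measurable[F i t] (X j t))
    {𝒴 : Set (Fin N → Ω → ℝ)} (h𝒴meas : ∀ y ∈ 𝒴, ∀ i, Measurable[F i T] (y i))
    (h𝒴R0 : zeroSum Ω N ⊆ 𝒴)
    (h𝒴add : ∀ y ∈ 𝒴, ∀ z ∈ 𝒴, (fun i ω => y i ω + z i ω) ∈ 𝒴)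
    (h𝒴smul : ∀ y ∈ 𝒴, ∀ c : ℝ, (fun i ω => c * y i ω) ∈ 𝒴)
    (hNCA : NCA P (fun i => gainsSet (F i) T (assets i) X) 𝒴)
    {y : Fin N → Ω → ℝ} (hy : y ∈ 𝒴) :
    (MeY P F T assets X (spanExch (fun _ : Fin 1 => y))).Nonempty := by
  classical
  set μ : Measure (Σ _ : Fin N, Ω) := jointMeasure fun _ => P with hμ
  set L := trades F T assets X y with hL
  have hNA : ∀ a ∈ gains L, 0 ≤ᵐ[μ] a → a =ᵐ[μ] 0 := by
    intro a ha hpos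
    obtain ⟨k, z, hz, hk, hakz⟩ := exists_of_mem_gains_trades hN h𝒴R0 h𝒴add h𝒴smul hy ha
    have h1 := hNCA k z hz hk fun i => by
      filter_upwards [ae_jointMeasure.1 hpos i] with ω hω
      rw [← hakz]
      exact hω
    refine ae_jointMeasure.2 fun i => ?_
    filter_upwards [h1 i] with ω hω
    rw [hakz]
    exact hω
  have hXm : ∀ i, ∀ j ∈ assets i, ∀ t, t ≤ T → Measurable (X j t) := fun i j hj t ht =>
    (hadapted i j hj t ht).mono (hFle i t) le_rfl
  have hym : ∀ i, Measurable (y i) := fun i => (h𝒴meas y hy i).mono (hFle i T) le_rfl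
  set φ : (Σ _ : Fin N, Ω) → ℝ := fun x => 1 + |y x.1 x.2| +
    ∑ j ∈ assets x.1, ∑ t ∈ Finset.range (T + 1), |X j t x.2| with hφ
  have hφm : Measurable φ := measurable_sigma_iff.2 fun i =>
    (measurable_const.add (hym i).abs).add <| Finset.measurable_fun_sum _ fun j hj =>
      Finset.measurable_fun_sum _ fun t ht =>
        (hXm i j hj t (Nat.lt_succ_iff.1 (Finset.mem_range.1 ht))).abs
  have hsum0 : ∀ (x : Σ _ : Fin N, Ω),
      0 ≤ ∑ j ∈ assets x.1, ∑ t ∈ Finset.range (T + 1), |X j t x.2| := fun x =>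
    Finset.sum_nonneg fun j _ => Finset.sum_nonneg fun t _ => abs_nonneg _
  have hφ1 : ∀ x, 1 ≤ φ x := fun x => by
    have := abs_nonneg (y x.1 x.2)
    simp only [hφ]
    linarith [hsum0 x]
  have hφX : ∀ i, ∀ j ∈ assets i, ∀ t, t ≤ T → ∀ ω, |X j t ω| ≤ φ ⟨i, ω⟩ := by
    intro i j hj t ht ω
    have h1 := Finset.single_le_sum (f := fun t => |X j t ω|) (fun _ _ => abs_nonneg _)
      (Finset.mem_range.2 (Nat.lt_succ_iff.2 ht))
    have h2 := Finset.single_le_sum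
      (f := fun j => ∑ t ∈ Finset.range (T + 1), |X j t ω|)
      (fun _ _ => Finset.sum_nonneg fun t _ => abs_nonneg _) hj
    have h3 := abs_nonneg (y i ω)
    simp only [hφ]
    linarith
  have hφy : ∀ i ω, |y i ω| ≤ φ ⟨i, ω⟩ := fun i ω => by
    have := hsum0 ⟨i, ω⟩
    simp only [hφ] at this ⊢
    linarith
  obtain ⟨Z, hZm, hZpos, hZφ, hZ⟩ := exists_deflator
    (hullClosed_gains (pairwise_trades hFmono T assets X y) hNA) (zero_mem_gains _)
    (fun a ha b hb => add_mem_gains ha hb)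
    (fun c a ha => by
      have := mul_mem_gains (𝓗 := ⊥) (h := fun _ => c) measurable_const
        (fun _ _ => bot_le) ha
      exact this) hNA hφm hφ1
  have hZint : ∀ f : (Σ _ : Fin N, Ω) → ℝ, Measurable f → (∃ c, ∀ x, |f x| ≤ c * φ x) →
      Integrable (fun x => Z x * f x) μ := by
    rintro f hf ⟨c, hc⟩
    refine (hZφ.const_mul c).mono (hZm.mul hf).aestronglyMeasurable ?_
    filter_upwards [hZpos] with x hx
    rw [norm_mul, Real.norm_of_nonneg hx.le, Real.norm_eq_abs]
    refine le_trans ?_ (le_abs_self _)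
    rw [mul_left_comm]
    exact mul_le_mul_of_nonneg_left (hc x) hx.le
  have hZi : ∀ i, Integrable (fun ω => Z ⟨i, ω⟩) P := fun i => by
    have := hZint (fun _ => 1) measurable_const ⟨1, fun x => by simpa using hφ1 x⟩
    simpa using integrable_jointMeasure.1 this i
  have hZmi : ∀ i, Measurable fun ω => Z ⟨i, ω⟩ := measurable_sigma_iff.1 hZm
  choose Q hQprob hQP hPQ hQint hQval using fun i =>
    exists_tilted_measure P (hZmi i) (ae_jointMeasure.1 hZpos i) (hZi i)
  -- the normalizing constants agree
  have hconst : ∀ i, ∫ ω, Z ⟨i, ω⟩ ∂P = (∑ r, ∫ ω, Z ⟨r, ω⟩ ∂P) / N := by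
    intro i
    have hm : Measurable (unitExchange i : (Σ _ : Fin N, Ω) → ℝ) :=
      measurable_sigma_iff.2 fun _ => by
        simp only [unitExchange_mk]
        exact measurable_const
    have hb : ∃ c, ∀ x : Σ _ : Fin N, Ω, |unitExchange i x| ≤ c * φ x :=
      ⟨1, fun x => by rw [one_mul]; exact (abs_unitExchange_le_one i x).trans (hφ1 x)⟩
    have hmem := mul_trade_mem_gains (L := L) (p := (⊥, unitExchange i)) (h := 1)
      (mem_trades.2 (Or.inr (Or.inl ⟨i, rfl⟩))) measurable_const
    rw [one_mul] at hmem
    have h0 := hZ _ hmem hm.aestronglyMeasurable hb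
    rw [integral_jointMeasure (hZint _ hm hb)] at h0
    have hval : ∀ r, ∫ ω, Z ⟨r, ω⟩ * unitExchange i ⟨r, ω⟩ ∂P
        = (∫ ω, Z ⟨r, ω⟩ ∂P) * ((if r = i then (1 : ℝ) else 0) - 1 / N) := fun r => by
      simp only [unitExchange_mk, integral_mul_const]
    rw [Finset.sum_congr rfl fun r _ => hval r] at h0
    simp only [mul_sub, Finset.sum_sub_distrib, mul_ite, mul_one, mul_zero, Finset.sum_ite_eq',
      Finset.mem_univ, if_true, ← Finset.sum_mul] at h0
    rw [div_eq_mul_one_div]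
    linarith
  have hQX : ∀ i, ∀ j ∈ assets i, ∀ t, t ≤ T → Integrable (X j t) (Q i) := by
    intro i j hj t ht
    refine hQint i _ ?_
    have hZφi := integrable_jointMeasure.1 hZφ i
    refine hZφi.mono ((hZmi i).mul (hXm i j hj t ht)).aestronglyMeasurable ?_
    refine Eventually.of_forall fun ω => ?_
    rw [norm_mul, norm_mul]
    refine mul_le_mul_of_nonneg_left ?_ (norm_nonneg _)
    exact (hφX i j hj t ht ω).trans (le_abs_self _)
  have hQy : ∀ i, Integrable (y i) (Q i) := by
    intro i
    refine hQint i _ ?_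
    exact integrable_jointMeasure.1 (hZint (fun x => y x.1 x.2) (measurable_sigma_iff.2 hym)
      ⟨1, fun x => by rw [one_mul]; exact hφy x.1 x.2⟩) i
  have hysum : ∑ i, ∫ ω, y i ω ∂Q i = 0 := by
    have hm : Measurable fun x : (Σ _ : Fin N, Ω) => y x.1 x.2 := measurable_sigma_iff.2 hym
    have hb : ∃ c, ∀ x : Σ _ : Fin N, Ω, |y x.1 x.2| ≤ c * φ x :=
      ⟨1, fun x => by rw [one_mul]; exact hφy x.1 x.2⟩
    have hmem := mul_trade_mem_gains (L := L) (p := (⊥, fun x => y x.1 x.2)) (h := 1)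
      (mem_trades.2 (Or.inl rfl)) measurable_const
    rw [one_mul] at hmem
    have h0 := hZ _ hmem hm.aestronglyMeasurable hb
    rw [integral_jointMeasure (hZint _ hm hb)] at h0
    have hval : ∀ i, ∫ ω, y i ω ∂Q i =
        ((∑ r, ∫ ω, Z ⟨r, ω⟩ ∂P) / N)⁻¹ * ∫ ω, Z ⟨i, ω⟩ * y i ω ∂P := fun i => by
      rw [hQval, hconst]
    rw [Finset.sum_congr rfl fun i _ => hval i, ← Finset.mul_sum, h0, mul_zero]
  have hinc : ∀ i, ∀ j ∈ assets i, ∀ s < T, ∀ B, MeasurableSet[F i s] B →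
      ∫ ω in B, (X j (s + 1) ω - X j s ω) ∂Q i = 0 := by
    intro i j hj s hs B hB
    set h : (Σ _ : Fin N, Ω) → ℝ := fun x => if x.1 = i then B.indicator 1 x.2 else 0 with hh
    have hhm : Measurable[jointSpace fun i => F i s] h := by
      refine measurable_jointSpace.2 fun r => ?_
      by_cases hr : r = i
      · subst hr
        simp only [hh, if_true]
        exact measurable_indicator_one hB
      · simp only [hh, if_neg hr]
        exact measurable_const
    have hmem := mul_trade_mem_gains (L := L)
      (p := (jointSpace fun i => F i s, priceStep assets X j s))
      (mem_trades.2 (Or.inr (Or.inr ⟨s, hs, j, rfl⟩))) hhm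
    have hm : Measurable (h * priceStep assets X j s) := by
      refine (hhm.mono (jointSpace_mono fun i => hFle i s) le_rfl).mul
        (measurable_sigma_iff.2 fun r => ?_)
      by_cases hr : j ∈ assets r
      · simp only [priceStep, if_pos hr]
        exact (hXm r j hr _ hs).sub (hXm r j hr _ hs.le)
      · simp only [priceStep, if_neg hr]
        exact measurable_const
    have hb : ∃ c, ∀ x, |(h * priceStep assets X j s) x| ≤ c * φ x := by
      refine ⟨2, fun x => ?_⟩
      have h1 : |h x| ≤ 1 := by
        simp only [hh, Set.indicator_apply]
        split_ifs <;> simp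
      have h2 : |priceStep assets X j s x| ≤ 2 * φ x := by
        unfold priceStep
        split_ifs with hr
        · have h3 := hφX x.1 j hr _ hs x.2
          have h4 := hφX x.1 j hr _ hs.le x.2
          calc _ ≤ |X j (s + 1) x.2| + |X j s x.2| := abs_sub _ _
            _ ≤ φ x + φ x := add_le_add h3 h4
            _ = _ := by ring
        · rw [abs_zero]
          linarith [hφ1 x]
      rw [Pi.mul_apply, abs_mul]
      exact (mul_le_of_le_one_left (abs_nonneg _) h1).trans h2
    have h0 := hZ _ hmem hm.aestronglyMeasurable hb
    rw [integral_jointMeasure (hZint _ hm hb), Finset.sum_eq_single i] at h0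
    · rw [← integral_indicator (hFle i s B hB), hQval]
      rw [← mul_zero, ← h0]
      congr 1
      refine integral_congr_ae (Eventually.of_forall fun ω => ?_)
      simp only [Pi.mul_apply, hh, if_true, priceStep, if_pos hj, Set.indicator_apply]
      split_ifs <;> simp
    · intro r _ hr
      simp [hh, hr]
    · simp
  refine ⟨Q, fun i => ⟨hQprob i, hQP i, hPQ i, fun j hj => ⟨hQX i j hj, fun s t hst ht => ?_⟩⟩,
    ?_, ?_⟩
  · exact martingale_of_forall_increment (hFmono i) (hFle i) (hadapted i j hj) (hQX i j hj)
      (hinc i j hj) hst ht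
  · rintro z ⟨x, c, -, hz⟩ i
    rw [hz i]
    simpa using (hQy i).const_mul (c 0)
  · rintro z ⟨x, c, hx, hz⟩
    refine le_of_eq ?_
    have : ∀ i, ∫ ω, z i ω ∂Q i = x i + c 0 * ∫ ω, y i ω ∂Q i := fun i => by
      rw [hz i]
      simp only [Fin.sum_univ_one]
      rw [integral_add (integrable_const _) ((hQy i).const_mul _), integral_const_mul]
      simp
    simp_rw [this]
    rw [Finset.sum_add_distrib, ← Finset.mul_sum, hx, hysum]
    simp

/-- Collective martingale measures for an exchange rule out arbitrage using that exchange. -/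
lemma ae_eq_zero_of_mem_MeY {Ω : Type*} {m0 : MeasurableSpace Ω} {P : Measure Ω}
    {T J N : ℕ} {F : Fin N → ℕ → MeasurableSpace Ω}
    (hFmono : ∀ i, Monotone (F i)) (hFle : ∀ i t, F i t ≤ m0) {X : Fin J → ℕ → Ω → ℝ}
    {assets : Fin N → Finset (Fin J)} {y : Fin N → Ω → ℝ} {Q : Fin N → Measure Ω}
    (hQ : Q ∈ MeY P F T assets X (spanExch (fun _ : Fin 1 => y)))
    {k : Fin N → Ω → ℝ} (hk : ∀ i, k i ∈ gainsSet (F i) T (assets i) X)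
    (hpos : ∀ i, ∀ᵐ ω ∂P, 0 ≤ k i ω + y i ω) (i : Fin N) :
    (fun ω => k i ω + y i ω) =ᵐ[P] fun _ => (0 : ℝ) := by
  obtain ⟨hQmart, hQint, hQle⟩ := hQ
  have hprob : ∀ i, IsProbabilityMeasure (Q i) := fun i => (hQmart i).1
  have hymem : ∀ c : ℝ, (fun i ω => c * y i ω) ∈ spanExch (fun _ : Fin 1 => y) := fun c =>
    ⟨0, fun _ => c, by simp, fun i => by simp⟩
  have hyint : ∀ i, Integrable (y i) (Q i) := fun i => by
    simpa using hQint _ (hymem 1) i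
  have hysum : ∑ i, ∫ ω, y i ω ∂Q i = 0 := by
    have h1 := hQle _ (hymem 1)
    have h2 := hQle _ (hymem (-1))
    simp only [integral_const_mul, ← Finset.mul_sum] at h1 h2
    linarith
  have hXint : ∀ j s, s < T → Integrable (priceStep assets X j s) (jointMeasure Q) :=
    fun j s hs => integrable_jointMeasure.2 fun i => by
      by_cases hj : j ∈ assets i
      · simp only [priceStep, if_pos hj]
        exact (((hQmart i).2.2.2 j hj).1 _ hs).sub (((hQmart i).2.2.2 j hj).1 _ hs.le)
      · simp only [priceStep, if_neg hj]
        exact integrable_zero _ _ _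
  have hle : ∀ p ∈ trades F T assets X y, p.1 ≤ jointSpace fun _ => m0 := by
    intro p hp
    rcases mem_trades.1 hp with rfl | ⟨r, rfl⟩ | ⟨s, hs, j, rfl⟩
    · exact bot_le
    · exact bot_le
    · exact jointSpace_mono fun i => hFle i s
  have hint : ∀ p ∈ trades F T assets X y, Integrable p.2 (jointMeasure Q) := by
    intro p hp
    rcases mem_trades.1 hp with rfl | ⟨r, rfl⟩ | ⟨s, hs, j, rfl⟩
    · exact integrable_jointMeasure.2 hyint
    · exact integrable_jointMeasure.2 fun i => by
        have := hprob i
        exact integrable_const ((if i = r then (1 : ℝ) else 0) - 1 / N)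
    · exact hXint j s hs
  have hzero : ∀ p ∈ trades F T assets X y, ∀ h : (Σ _ : Fin N, Ω) → ℝ, Measurable[p.1] h →
      (∃ c, ∀ x, |h x| ≤ c) → ∫ x, h x * p.2 x ∂jointMeasure Q = 0 := by
    rintro p hp h hh ⟨c, hc⟩
    have hhp : Integrable (fun x => h x * p.2 x) (jointMeasure Q) :=
      (hint p hp).bdd_mul (hh.mono (hle p hp) le_rfl).aestronglyMeasurable
        (Eventually.of_forall hc)
    rw [integral_jointMeasure hhp]
    rcases mem_trades.1 hp with rfl | ⟨r, rfl⟩ | ⟨s, hs, j, rfl⟩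
    · obtain ⟨d, rfl⟩ := exists_eq_const_of_measurable_bot hh
      simp only [integral_const_mul, ← Finset.mul_sum, hysum, mul_zero]
    · obtain ⟨d, rfl⟩ := exists_eq_const_of_measurable_bot hh
      have hN : (N : ℝ) ≠ 0 := by exact_mod_cast r.pos.ne'
      have hval : ∀ i, ∫ ω, d * unitExchange r ⟨i, ω⟩ ∂Q i
          = d * ((if i = r then (1 : ℝ) else 0) - 1 / N) := fun i => by
        simp [unitExchange_mk]
      rw [Finset.sum_congr rfl fun i _ => hval i, ← Finset.mul_sum]
      simp [Finset.sum_sub_distrib, hN]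
    · refine Finset.sum_eq_zero fun i _ => ?_
      by_cases hj : j ∈ assets i
      · simp only [priceStep, if_pos hj]
        obtain ⟨h1, h2⟩ := (hQmart i).2.2.2 j hj
        exact integral_mul_increment_eq_zero (hFle i s) (h1 _ hs.le) (h1 _ hs)
          (h2 s (s + 1) (Nat.le_succ s) hs) (measurable_jointSpace.1 hh i) fun ω => hc ⟨i, ω⟩
      · simp [priceStep, hj]
  have hpos' : ∀ᵐ x ∂jointMeasure Q, 0 ≤ k x.1 x.2 + y x.1 x.2 :=
    ae_jointMeasure.2 fun i => (hQmart i).2.1 (hpos i)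
  obtain ⟨h1, h2⟩ := integral_gains_eq_zero (pairwise_trades hFmono T assets X y) hle hint hzero _
    (mem_gains_trades y hk) 0 (integrable_zero _ _ _) (by simpa using hpos')
  rw [integral_eq_zero_iff_of_nonneg_ae hpos' h1] at h2
  exact (hQmart i).2.2.1 (ae_jointMeasure.1 h2 i)

/-- collective FTAP I via one-dimensional spans (Corollary cor1). -/
theorem collective_FTAP_I_spans
    {Ω : Type*} [m0 : MeasurableSpace Ω]
    (P : Measure Ω) [IsProbabilityMeasure P]
    (T J N : ℕ) (hT : 1 ≤ T) (hJ : 1 ≤ J) (hN : 1 ≤ N)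
    (F : Fin N → ℕ → MeasurableSpace Ω)
    (hFmono : ∀ i, Monotone (F i))
    (hFle : ∀ i t, F i t ≤ m0)
    (hFzero : ∀ i, ∀ A : Set Ω, MeasurableSet[F i 0] A → P A = 0 ∨ P A = 1)
    (X : Fin J → ℕ → Ω → ℝ)
    (assets : Fin N → Finset (Fin J))
    (hassets : ∀ i, (assets i).Nonempty)
    (hcover : ∀ j, ∃ i, j ∈ assets i)
    (hadapted : ∀ i, ∀ j ∈ assets i, ∀ t, t ≤ T → Measurable[F i t] (X j t))
    (𝒴 : Set (Fin N → Ω → ℝ))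
    (h𝒴meas : ∀ y ∈ 𝒴, ∀ i, Measurable[F i T] (y i))
    (h𝒴R0 : zeroSum Ω N ⊆ 𝒴)
    (h𝒴add : ∀ y ∈ 𝒴, ∀ z ∈ 𝒴, (fun i ω => y i ω + z i ω) ∈ 𝒴)
    (h𝒴smul : ∀ y ∈ 𝒴, ∀ c : ℝ, (fun i ω => c * y i ω) ∈ 𝒴) :
    NCA P (fun i => gainsSet (F i) T (assets i) X) 𝒴 ↔
      ∀ y ∈ 𝒴, (MeY P F T assets X (spanExch (fun _ : Fin 1 => y))).Nonempty := by
  constructor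
  · intro hNCA y hy
    exact hNCA.nonempty_MeY hN hFmono hFle hadapted h𝒴meas h𝒴R0 h𝒴add h𝒴smul hy
  · intro hMe k y hy hk hpos i
    obtain ⟨Q, hQ⟩ := hMe y hy
    exact ae_eq_zero_of_mem_MeY hFmono hFle hQ hk hpos i

end CollectiveArb
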